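/- arXiv:2002.06613 — 3 statements merged into one kernel-verified Lean document; each statement's English description precedes it below -/
import Mathlib

section
/- Consider the linear system with multiplicative noise x_{t+1} = (A + Ā_t) x_t + (B + B̄_t) u_t, where x_t ∈ ℝ^n, u_t ∈ ℝ^m are square-integrable random vectors, A ∈ ℝ^{n×n}, B ∈ ℝ^{n×m} are fixed matrices, and Ā_t ∈ ℝ^{n×n}, B̄_t ∈ ℝ^{n×m} are square-integrable random matrices with E[Ā_t] = 0, E[B̄_t] = 0, such that Ā_t and B̄_t are independent of each other and the pair (Ā_t, B̄_t) is independent of the pair (x_t, u_t). Let Σ_A' := E[Ā_t ⊗ Ā_t] ∈ ℝ^{n²×n²} and Σ_B' := E[B̄_t ⊗ B̄_t] ∈ ℝ^{n²×m²}. Then the vectorized second-moment dynamics hold: vec(E[x_{t+1} x_{t+1}^T]) = (A ⊗ A + Σ_A') vec(E[x_t x_t^T]) + (B ⊗ B + Σ_B') vec(E[u_t u_t^T]) + (B ⊗ A) vec(E[x_t u_t^T]) + (A ⊗ B) vec(E[u_t x_t^T]). -/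
open Matrix MeasureTheory ProbabilityTheory
open scoped Kronecker

/-!
The outer product of the next state expands into four products `(M z) (N w)ᵀ`, and column-wise
vectorization turns each of them into `(N ⊗ M) vec (z wᵀ)`.  Independence of `(M, N)` from `(z, w)`
lets the expectation act on the two factors separately.  For `M = C + C̄` and `N = D + D̄` with
centred noises, `E[N ⊗ M] = D ⊗ C + E[D̄ ⊗ C̄]`, and the last term vanishes for independent noises.
-/

section RandomMatrix

variable {Ω 𝕜 ι ι' κ κ' : Type*} [RCLike 𝕜] [MeasurableSpace Ω] {μ : Measure Ω}

/-- The expectation `E[M]` of a random matrix, taken entrywise so that no norm on matrices has to be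
chosen. An entry is `0` where it is not integrable. -/
noncomputable def matrixExpectation (μ : Measure Ω) (M : Ω → Matrix ι κ 𝕜) : Matrix ι κ 𝕜 :=
  of fun i j ↦ ∫ ω, M ω i j ∂μ

section Expectation

theorem matrixExpectation_add {M N : Ω → Matrix ι κ 𝕜}
    (hM : ∀ i k, Integrable (fun ω ↦ M ω i k) μ) (hN : ∀ i k, Integrable (fun ω ↦ N ω i k) μ) :
    matrixExpectation μ (fun ω ↦ M ω + N ω) = matrixExpectation μ M + matrixExpectation μ N := by
  ext i k
  exact integral_add (hM i k) (hN i k)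

-- `Matrix` carries no σ-algebra, so random matrices whose joint independence is at stake are typed
-- as functions `Ω → ι → κ → 𝕜`.
theorem matrixExpectation_kronecker_eq_zero_of_indepFun {M : Ω → ι → κ → 𝕜} {N : Ω → ι' → κ' → 𝕜}
    (hM : ∀ i k, AEStronglyMeasurable (fun ω ↦ M ω i k) μ)
    (hN : ∀ j l, AEStronglyMeasurable (fun ω ↦ N ω j l) μ) (hM0 : ∀ i k, ∫ ω, M ω i k ∂μ = 0)
    (hMN : IndepFun M N μ) : matrixExpectation μ (fun ω ↦ of (M ω) ⊗ₖ of (N ω)) = 0 := by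
  ext ⟨i, j⟩ ⟨k, l⟩
  have hentry : IndepFun (fun ω ↦ M ω i k) (fun ω ↦ N ω j l) μ :=
    hMN.comp (φ := fun P : ι → κ → 𝕜 ↦ P i k) (ψ := fun Q : ι' → κ' → 𝕜 ↦ Q j l)
      (by fun_prop) (by fun_prop)
  calc ∫ ω, M ω i k * N ω j l ∂μ
    _ = (∫ ω, M ω i k ∂μ) * ∫ ω, N ω j l ∂μ :=
      hentry.integral_fun_mul_eq_mul_integral (hM i k) (hN j l)
    _ = 0 := by rw [hM0, zero_mul]

theorem integral_const_add_mul_const_add [IsProbabilityMeasure μ] (c d : 𝕜) {f g : Ω → 𝕜}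
    (hf : MemLp f 2 μ) (hg : MemLp g 2 μ) (hf0 : ∫ ω, f ω ∂μ = 0) (hg0 : ∫ ω, g ω ∂μ = 0) :
    ∫ ω, (c + f ω) * (d + g ω) ∂μ = c * d + ∫ ω, f ω * g ω ∂μ := by
  have hcg : Integrable (fun ω ↦ c * g ω) μ := (hg.integrable one_le_two).const_mul c
  have hfd : Integrable (fun ω ↦ f ω * d) μ := (hf.integrable one_le_two).mul_const d
  have hfg : Integrable (fun ω ↦ f ω * g ω) μ := hf.integrable_mul hg
  calc ∫ ω, (c + f ω) * (d + g ω) ∂μ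
    _ = ∫ ω, (c * d + c * g ω) + (f ω * d + f ω * g ω) ∂μ := by
      simp only [add_mul, mul_add, add_add_add_comm]
    _ = (c * d + c * ∫ ω, g ω ∂μ) + ((∫ ω, f ω ∂μ) * d + ∫ ω, f ω * g ω ∂μ) := by
      rw [integral_add ((integrable_const _).fun_add hcg) (hfd.fun_add hfg),
        integral_add (integrable_const _) hcg, integral_add hfd hfg, integral_const,
        integral_const_mul, integral_mul_const, probReal_univ, one_smul]
    _ = c * d + ∫ ω, f ω * g ω ∂μ := by rw [hf0, hg0, mul_zero, zero_mul, add_zero, zero_add]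

theorem matrixExpectation_const_add_kronecker_const_add [IsProbabilityMeasure μ]
    (C : Matrix ι κ 𝕜) (D : Matrix ι' κ' 𝕜) {M : Ω → ι → κ → 𝕜} {N : Ω → ι' → κ' → 𝕜}
    (hM : ∀ i k, MemLp (fun ω ↦ M ω i k) 2 μ) (hN : ∀ j l, MemLp (fun ω ↦ N ω j l) 2 μ)
    (hM0 : ∀ i k, ∫ ω, M ω i k ∂μ = 0) (hN0 : ∀ j l, ∫ ω, N ω j l ∂μ = 0) :
    matrixExpectation μ (fun ω ↦ (C + of (M ω)) ⊗ₖ (D + of (N ω))) =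
      C ⊗ₖ D + matrixExpectation μ (fun ω ↦ of (M ω) ⊗ₖ of (N ω)) := by
  ext ⟨i, j⟩ ⟨k, l⟩
  exact integral_const_add_mul_const_add (C i k) (D j l) (hM i k) (hN j l) (hM0 i k) (hN0 j l)

theorem matrixExpectation_vecMulVec_add_add {y z : Ω → ι → 𝕜}
    (hy : ∀ i, MemLp (fun ω ↦ y ω i) 2 μ) (hz : ∀ i, MemLp (fun ω ↦ z ω i) 2 μ) :
    matrixExpectation μ (fun ω ↦ vecMulVec (y ω + z ω) (y ω + z ω)) =
      matrixExpectation μ (fun ω ↦ vecMulVec (y ω) (y ω)) +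
        matrixExpectation μ (fun ω ↦ vecMulVec (z ω) (z ω)) +
        matrixExpectation μ (fun ω ↦ vecMulVec (y ω) (z ω)) +
        matrixExpectation μ (fun ω ↦ vecMulVec (z ω) (y ω)) := by
  have hint {v w : Ω → ι → 𝕜} (hv : ∀ i, MemLp (fun ω ↦ v ω i) 2 μ)
      (hw : ∀ i, MemLp (fun ω ↦ w ω i) 2 μ) (i j : ι) :
      Integrable (fun ω ↦ vecMulVec (v ω) (w ω) i j) μ := (hv i).integrable_mul (hw j)
  have hyz (i : ι) : MemLp (fun ω ↦ (y ω + z ω) i) 2 μ := (hy i).add (hz i)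
  simp only [add_vecMulVec _ _ (_ + _)]
  rw [matrixExpectation_add (hint hy hyz) (hint hz hyz)]
  simp only [vecMulVec_add]
  rw [matrixExpectation_add (hint hy hy) (hint hy hz),
    matrixExpectation_add (hint hz hy) (hint hz hz)]
  abel

end Expectation

theorem memLp_two_mul_of_indepFun {f g : Ω → 𝕜} (hf : MemLp f 2 μ) (hg : MemLp g 2 μ)
    (hfg : IndepFun f g μ) : MemLp (fun ω ↦ f ω * g ω) 2 μ := by
  have hsq : IndepFun (fun ω ↦ ‖f ω‖ ^ 2) (fun ω ↦ ‖g ω‖ ^ 2) μ :=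
    hfg.comp (φ := fun a ↦ ‖a‖ ^ 2) (ψ := fun b ↦ ‖b‖ ^ 2) (by fun_prop) (by fun_prop)
  refine (memLp_two_iff_integrable_sq_norm (hf.1.mul hg.1)).2 ?_
  simp only [Pi.mul_apply, norm_mul, mul_pow]
  exact hsq.integrable_mul ((memLp_two_iff_integrable_sq_norm hf.1).1 hf)
    ((memLp_two_iff_integrable_sq_norm hg.1).1 hg)

section MulVec

variable [Fintype κ] {K : Ω → Matrix ι κ 𝕜} {v : Ω → κ → 𝕜}

theorem memLp_two_mulVec_of_indepFun (hK : ∀ i k, MemLp (fun ω ↦ K ω i k) 2 μ)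
    (hv : ∀ k, MemLp (fun ω ↦ v ω k) 2 μ)
    (hKv : ∀ i k, IndepFun (fun ω ↦ K ω i k) (fun ω ↦ v ω k) μ) (i : ι) :
    MemLp (fun ω ↦ (K ω *ᵥ v ω) i) 2 μ :=
  memLp_finsetSum _ fun k _ ↦ memLp_two_mul_of_indepFun (hK i k) (hv k) (hKv i k)

theorem integral_mulVec_of_indepFun (hK : ∀ i k, Integrable (fun ω ↦ K ω i k) μ)
    (hv : ∀ k, Integrable (fun ω ↦ v ω k) μ)
    (hKv : ∀ i k, IndepFun (fun ω ↦ K ω i k) (fun ω ↦ v ω k) μ) (i : ι) :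
    ∫ ω, (K ω *ᵥ v ω) i ∂μ = (matrixExpectation μ K *ᵥ fun k ↦ ∫ ω, v ω k ∂μ) i :=
  calc ∫ ω, ∑ k, K ω i k * v ω k ∂μ
    _ = ∑ k, ∫ ω, K ω i k * v ω k ∂μ :=
      integral_finsetSum _ fun k _ ↦ (hKv i k).integrable_mul (hK i k) (hv k)
    _ = ∑ k, (∫ ω, K ω i k ∂μ) * ∫ ω, v ω k ∂μ :=
      Finset.sum_congr rfl fun k _ ↦ (hKv i k).integral_fun_mul_eq_mul_integral
        (hK i k).aestronglyMeasurable (hv k).aestronglyMeasurable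

end MulVec

theorem vec_vecMulVec_mulVec {R : Type*} [NonUnitalCommSemiring R] [Fintype κ] [Fintype κ']
    (M : Matrix ι κ R) (N : Matrix ι' κ' R) (z : κ → R) (w : κ' → R) :
    vec (vecMulVec (M *ᵥ z) (N *ᵥ w)) = (N ⊗ₖ M) *ᵥ vec (vecMulVec z w) := by
  rw [kronecker_mulVec_vec, mul_vecMulVec, vecMulVec_mul, vecMul_transpose]

section Dynamics

variable [Fintype κ] [Fintype κ']

theorem vec_matrixExpectation_vecMulVec_mulVec
    {M : Ω → ι → κ → 𝕜} {N : Ω → ι' → κ' → 𝕜} {z : Ω → κ → 𝕜} {w : Ω → κ' → 𝕜}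
    (hM : ∀ i k, MemLp (fun ω ↦ M ω i k) 2 μ) (hN : ∀ j l, MemLp (fun ω ↦ N ω j l) 2 μ)
    (hz : ∀ k, MemLp (fun ω ↦ z ω k) 2 μ) (hw : ∀ l, MemLp (fun ω ↦ w ω l) 2 μ)
    (hindep : IndepFun (fun ω ↦ (M ω, N ω)) (fun ω ↦ (z ω, w ω)) μ) :
    vec (matrixExpectation μ fun ω ↦ vecMulVec (of (M ω) *ᵥ z ω) (of (N ω) *ᵥ w ω)) =
      matrixExpectation μ (fun ω ↦ of (N ω) ⊗ₖ of (M ω)) *ᵥ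
        vec (matrixExpectation μ fun ω ↦ vecMulVec (z ω) (w ω)) := by
  have hK (p : ι' × ι) (q : κ' × κ) :
      Integrable (fun ω ↦ (of (N ω) ⊗ₖ of (M ω)) p q) μ :=
    (hN p.1 q.1).integrable_mul (hM p.2 q.2)
  have hv (q : κ' × κ) : Integrable (fun ω ↦ vec (vecMulVec (z ω) (w ω)) q) μ :=
    (hz q.2).integrable_mul (hw q.1)
  have hKv (p : ι' × ι) (q : κ' × κ) :
      IndepFun (fun ω ↦ (of (N ω) ⊗ₖ of (M ω)) p q)
        (fun ω ↦ vec (vecMulVec (z ω) (w ω)) q) μ :=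
    hindep.comp
      (φ := fun P : (ι → κ → 𝕜) × (ι' → κ' → 𝕜) ↦ P.2 p.1 q.1 * P.1 p.2 q.2)
      (ψ := fun s : (κ → 𝕜) × (κ' → 𝕜) ↦ s.1 q.2 * s.2 q.1) (by fun_prop) (by fun_prop)
  ext p
  calc ∫ ω, vec (vecMulVec (of (M ω) *ᵥ z ω) (of (N ω) *ᵥ w ω)) p ∂μ
    _ = ∫ ω, ((of (N ω) ⊗ₖ of (M ω)) *ᵥ vec (vecMulVec (z ω) (w ω))) p ∂μ := by
      simp only [vec_vecMulVec_mulVec]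
    _ = _ := integral_mulVec_of_indepFun hK hv hKv p

theorem vec_matrixExpectation_vecMulVec_add_mulVec
    {M : Ω → ι → κ → 𝕜} {N : Ω → ι → κ' → 𝕜} {x : Ω → κ → 𝕜} {u : Ω → κ' → 𝕜}
    (hM : ∀ i k, MemLp (fun ω ↦ M ω i k) 2 μ) (hN : ∀ i l, MemLp (fun ω ↦ N ω i l) 2 μ)
    (hx : ∀ k, MemLp (fun ω ↦ x ω k) 2 μ) (hu : ∀ l, MemLp (fun ω ↦ u ω l) 2 μ)
    (hindep : IndepFun (fun ω ↦ (M ω, N ω)) (fun ω ↦ (x ω, u ω)) μ) :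
    vec (matrixExpectation μ fun ω ↦ vecMulVec (of (M ω) *ᵥ x ω + of (N ω) *ᵥ u ω)
        (of (M ω) *ᵥ x ω + of (N ω) *ᵥ u ω)) =
      matrixExpectation μ (fun ω ↦ of (M ω) ⊗ₖ of (M ω)) *ᵥ
          vec (matrixExpectation μ fun ω ↦ vecMulVec (x ω) (x ω)) +
        matrixExpectation μ (fun ω ↦ of (N ω) ⊗ₖ of (N ω)) *ᵥ
          vec (matrixExpectation μ fun ω ↦ vecMulVec (u ω) (u ω)) +
        matrixExpectation μ (fun ω ↦ of (N ω) ⊗ₖ of (M ω)) *ᵥ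
          vec (matrixExpectation μ fun ω ↦ vecMulVec (x ω) (u ω)) +
        matrixExpectation μ (fun ω ↦ of (M ω) ⊗ₖ of (N ω)) *ᵥ
          vec (matrixExpectation μ fun ω ↦ vecMulVec (u ω) (x ω)) := by
  have hMx : ∀ i, MemLp (fun ω ↦ (of (M ω) *ᵥ x ω) i) 2 μ :=
    memLp_two_mulVec_of_indepFun hM hx fun i k ↦
      hindep.comp (φ := fun P : (ι → κ → 𝕜) × (ι → κ' → 𝕜) ↦ P.1 i k)
        (ψ := fun s : (κ → 𝕜) × (κ' → 𝕜) ↦ s.1 k) (by fun_prop) (by fun_prop)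
  have hNu : ∀ i, MemLp (fun ω ↦ (of (N ω) *ᵥ u ω) i) 2 μ :=
    memLp_two_mulVec_of_indepFun hN hu fun i l ↦
      hindep.comp (φ := fun P : (ι → κ → 𝕜) × (ι → κ' → 𝕜) ↦ P.2 i l)
        (ψ := fun s : (κ → 𝕜) × (κ' → 𝕜) ↦ s.2 l) (by fun_prop) (by fun_prop)
  have hMM : IndepFun (fun ω ↦ (M ω, M ω)) (fun ω ↦ (x ω, x ω)) μ :=
    hindep.comp (measurable_fst.prodMk measurable_fst) (measurable_fst.prodMk measurable_fst)
  have hNN : IndepFun (fun ω ↦ (N ω, N ω)) (fun ω ↦ (u ω, u ω)) μ :=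
    hindep.comp (measurable_snd.prodMk measurable_snd) (measurable_snd.prodMk measurable_snd)
  have hNM : IndepFun (fun ω ↦ (N ω, M ω)) (fun ω ↦ (u ω, x ω)) μ :=
    hindep.comp measurable_swap measurable_swap
  rw [matrixExpectation_vecMulVec_add_add hMx hNu, vec_add, vec_add, vec_add,
    vec_matrixExpectation_vecMulVec_mulVec hM hM hx hx hMM,
    vec_matrixExpectation_vecMulVec_mulVec hN hN hu hu hNN,
    vec_matrixExpectation_vecMulVec_mulVec hM hN hx hu hindep,
    vec_matrixExpectation_vecMulVec_mulVec hN hM hu hx hNM]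

theorem second_moment_dynamics_general [IsProbabilityMeasure μ]
    (A : Matrix ι κ 𝕜) (B : Matrix ι κ' 𝕜) {x : Ω → κ → 𝕜} {u : Ω → κ' → 𝕜}
    {Abar : Ω → ι → κ → 𝕜} {Bbar : Ω → ι → κ' → 𝕜}
    (hx : ∀ k, MemLp (fun ω ↦ x ω k) 2 μ) (hu : ∀ l, MemLp (fun ω ↦ u ω l) 2 μ)
    (hAbar : ∀ i k, MemLp (fun ω ↦ Abar ω i k) 2 μ)
    (hBbar : ∀ i l, MemLp (fun ω ↦ Bbar ω i l) 2 μ)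
    (hA0 : ∀ i k, ∫ ω, Abar ω i k ∂μ = 0) (hB0 : ∀ i l, ∫ ω, Bbar ω i l ∂μ = 0)
    (hindep : IndepFun (fun ω ↦ (Abar ω, Bbar ω)) (fun ω ↦ (x ω, u ω)) μ) :
    vec (matrixExpectation μ fun ω ↦
        vecMulVec ((A + of (Abar ω)) *ᵥ x ω + (B + of (Bbar ω)) *ᵥ u ω)
          ((A + of (Abar ω)) *ᵥ x ω + (B + of (Bbar ω)) *ᵥ u ω)) =
      (A ⊗ₖ A + matrixExpectation μ fun ω ↦ of (Abar ω) ⊗ₖ of (Abar ω)) *ᵥ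
          vec (matrixExpectation μ fun ω ↦ vecMulVec (x ω) (x ω)) +
        (B ⊗ₖ B + matrixExpectation μ fun ω ↦ of (Bbar ω) ⊗ₖ of (Bbar ω)) *ᵥ
          vec (matrixExpectation μ fun ω ↦ vecMulVec (u ω) (u ω)) +
        (B ⊗ₖ A + matrixExpectation μ fun ω ↦ of (Bbar ω) ⊗ₖ of (Abar ω)) *ᵥ
          vec (matrixExpectation μ fun ω ↦ vecMulVec (x ω) (u ω)) +
        (A ⊗ₖ B + matrixExpectation μ fun ω ↦ of (Abar ω) ⊗ₖ of (Bbar ω)) *ᵥ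
          vec (matrixExpectation μ fun ω ↦ vecMulVec (u ω) (x ω)) := by
  have hM (i : ι) (k : κ) : MemLp (fun ω ↦ A i k + Abar ω i k) 2 μ :=
    (memLp_const (A i k)).add (hAbar i k)
  have hN (i : ι) (l : κ') : MemLp (fun ω ↦ B i l + Bbar ω i l) 2 μ :=
    (memLp_const (B i l)).add (hBbar i l)
  have hMN : IndepFun (fun ω ↦ (fun i k ↦ A i k + Abar ω i k, fun i l ↦ B i l + Bbar ω i l))
      (fun ω ↦ (x ω, u ω)) μ :=
    hindep.comp (φ := fun P : (ι → κ → 𝕜) × (ι → κ' → 𝕜) ↦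
      (fun i k ↦ A i k + P.1 i k, fun i l ↦ B i l + P.2 i l))
      (by fun_prop) measurable_id
  rw [← matrixExpectation_const_add_kronecker_const_add A A hAbar hAbar hA0 hA0,
    ← matrixExpectation_const_add_kronecker_const_add B B hBbar hBbar hB0 hB0,
    ← matrixExpectation_const_add_kronecker_const_add B A hBbar hAbar hB0 hA0,
    ← matrixExpectation_const_add_kronecker_const_add A B hAbar hBbar hA0 hB0]
  exact vec_matrixExpectation_vecMulVec_add_mulVec hM hN hx hu hMN

end Dynamics

end RandomMatrix

/-- Vectorized second-moment dynamics of a linear system with multiplicative noise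
`x_{t+1} = (A + Ā) x + (B + B̄) u`.  Vectorizations are column-wise: a pair index `(j, i)`
stands for the linear index `(j-1)p + i`, so e.g. `vec(E[x xᵀ]) (j, i) = E[x_i x_j]`.
`Σ_A' = E[Ā ⊗ Ā]` and `Σ_B' = E[B̄ ⊗ B̄]` are taken entrywise.  The claim:
`vec(E[x₊ x₊ᵀ]) = (A ⊗ A + Σ_A') vec(E[x xᵀ]) + (B ⊗ B + Σ_B') vec(E[u uᵀ])
  + (B ⊗ A) vec(E[x uᵀ]) + (A ⊗ B) vec(E[u xᵀ])`. -/
theorem second_moment_dynamics {Ω : Type*} [MeasureSpace Ω]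
    [IsProbabilityMeasure (volume : Measure Ω)] {n m : ℕ}
    (A : Matrix (Fin n) (Fin n) ℝ) (B : Matrix (Fin n) (Fin m) ℝ)
    (x : Ω → Fin n → ℝ) (u : Ω → Fin m → ℝ)
    (Abar : Ω → Fin n → Fin n → ℝ) (Bbar : Ω → Fin n → Fin m → ℝ)
    (hx : ∀ i, MemLp (fun ω => x ω i) 2)
    (hu : ∀ j, MemLp (fun ω => u ω j) 2)
    (hAbar : ∀ i j, MemLp (fun ω => Abar ω i j) 2)
    (hBbar : ∀ i j, MemLp (fun ω => Bbar ω i j) 2)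
    (hA0 : ∀ i j, (∫ ω, Abar ω i j) = 0)
    (hB0 : ∀ i j, (∫ ω, Bbar ω i j) = 0)
    (hindepAB : IndepFun Abar Bbar)
    (hindep : IndepFun (fun ω => (Abar ω, Bbar ω)) (fun ω => (x ω, u ω))) :
    -- the next state `x₊ = (A + Ā) x + (B + B̄) u`
    (fun p : Fin n × Fin n =>
        ∫ ω, (((A + Matrix.of (Abar ω)) *ᵥ x ω + (B + Matrix.of (Bbar ω)) *ᵥ u ω) p.2 *
              ((A + Matrix.of (Abar ω)) *ᵥ x ω + (B + Matrix.of (Bbar ω)) *ᵥ u ω) p.1)) =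
      (A ⊗ₖ A + Matrix.of fun p q => ∫ ω, (Matrix.of (Abar ω) ⊗ₖ Matrix.of (Abar ω)) p q) *ᵥ
          (fun p : Fin n × Fin n => ∫ ω, x ω p.2 * x ω p.1) +
        (B ⊗ₖ B + Matrix.of fun p q => ∫ ω, (Matrix.of (Bbar ω) ⊗ₖ Matrix.of (Bbar ω)) p q) *ᵥ
          (fun p : Fin m × Fin m => ∫ ω, u ω p.2 * u ω p.1) +
        (B ⊗ₖ A) *ᵥ (fun p : Fin m × Fin n => ∫ ω, x ω p.2 * u ω p.1) +
        (A ⊗ₖ B) *ᵥ (fun p : Fin n × Fin m => ∫ ω, u ω p.2 * x ω p.1) := by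
  have hAB : matrixExpectation ℙ (fun ω ↦ of (Abar ω) ⊗ₖ of (Bbar ω)) = 0 :=
    matrixExpectation_kronecker_eq_zero_of_indepFun (fun i k ↦ (hAbar i k).aestronglyMeasurable)
      (fun j l ↦ (hBbar j l).aestronglyMeasurable) hA0 hindepAB
  have hBA : matrixExpectation ℙ (fun ω ↦ of (Bbar ω) ⊗ₖ of (Abar ω)) = 0 :=
    matrixExpectation_kronecker_eq_zero_of_indepFun (fun i k ↦ (hBbar i k).aestronglyMeasurable)
      (fun j l ↦ (hAbar j l).aestronglyMeasurable) hB0 hindepAB.symm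
  have h := second_moment_dynamics_general A B hx hu hAbar hBbar hA0 hB0 hindep
  rwa [hAB, hBA, add_zero, add_zero] at h
end

section
/- Let A ∈ ℝ^{n×n}, B ∈ ℝ^{n×m} with (A, B) controllable, let μ_0 ∈ ℝ^n be fixed, and suppose ℓ > (1/2)mn² + (1/2)mn + m + 1. For inputs ν_0, …, ν_{ℓ-1} ∈ ℝ^m define μ_{t+1} = A μ_t + B ν_t for 0 ≤ t ≤ ℓ-1, and let Z ∈ ℝ^{(n+m)×ℓ} be the matrix whose t-th column (for t = 1, …, ℓ, read right to left) stacks μ_{t-1} over ν_{t-1}, i.e., Z = [[μ_{ℓ-1}, …, μ_0]; [ν_{ℓ-1}, …, ν_0]]. Then the set V := {(ν_0^T, …, ν_{ℓ-1}^T)^T ∈ ℝ^{mℓ} : rank(Z) < n+m} has Lebesgue measure zero in ℝ^{mℓ}. -/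
open Matrix MeasureTheory

/-- The first-moment trajectory `μ_{t+1} = A μ_t + B ν_t` started at `μ₀`. -/
noncomputable def traj {n m : ℕ} (A : Matrix (Fin n) (Fin n) ℝ) (B : Matrix (Fin n) (Fin m) ℝ)
    (μ0 : Fin n → ℝ) (ν : ℕ → Fin m → ℝ) : ℕ → Fin n → ℝ
  | 0 => μ0
  | t + 1 => A *ᵥ traj A B μ0 ν t + B *ᵥ ν t

/-- The controllability matrix `[B, AB, …, A^{n-1} B] ∈ ℝ^{n × nm}`. -/
noncomputable def ctrbMat {n m : ℕ} (A : Matrix (Fin n) (Fin n) ℝ)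
    (B : Matrix (Fin n) (Fin m) ℝ) : Matrix (Fin n) (Fin n × Fin m) ℝ :=
  Matrix.of fun i kj => (A ^ (kj.1 : ℕ) * B) i kj.2

/-- `(A, B)` is controllable if the controllability matrix has rank `n`. -/
def Controllable {n m : ℕ} (A : Matrix (Fin n) (Fin n) ℝ)
    (B : Matrix (Fin n) (Fin m) ℝ) : Prop :=
  (ctrbMat A B).rank = n

/-- The data matrix `Z = [[μ_{ℓ-1}, …, μ_0]; [ν_{ℓ-1}, …, ν_0]] ∈ ℝ^{(n+m) × ℓ}` regarded
as a function of the inputs `ν_0, …, ν_{ℓ-1}`: its column `c` (columns listed left to right,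
so the time index is `ℓ - 1 - c = c.rev`) stacks `μ_{ℓ-1-c}` over `ν_{ℓ-1-c}`. -/
noncomputable def Zmat {n m ℓ : ℕ} (A : Matrix (Fin n) (Fin n) ℝ)
    (B : Matrix (Fin n) (Fin m) ℝ) (μ0 : Fin n → ℝ) (ν : Fin ℓ → Fin m → ℝ) :
    Matrix (Fin n ⊕ Fin m) (Fin ℓ) ℝ :=
  Matrix.of fun r c =>
    Sum.elim
      (fun i => traj A B μ0 (fun t => if h : t < ℓ then ν ⟨t, h⟩ else 0) c.rev i)
      (fun j => ν c.rev j) r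

/-!
Almost every choice of inputs makes the first `n + m` columns `(μ_t, ν_t)` of the data matrix
linearly independent. Suppose the columns before time `t` are independent with span `W ≠ ⊤`. As a
function of `ν_t` alone, the condition `(μ_t, ν_t) ∈ W` cuts out an affine subspace, so by Fubini it
suffices that this subspace is proper. If it were everything, `W` would contain `0 × ℝᵐ`, hence
`W = X × ℝᵐ` with `X ∋ μ_0, …, μ_t`. The map `(x, u) ↦ A x + B u` sends the generators
`(μ_s, ν_s)` of `W` to `μ_{s+1} ∈ X`, so `X` is `A`-invariant and contains the range of `B`;
controllability forces `X = ⊤` and `W = ⊤`.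
-/

open Set Submodule

theorem span_range_prodMk_eq_top {R V U : Type*} [Ring R] [AddCommGroup V] [Module R V]
    [AddCommGroup U] [Module R U] {f : V →ₗ[R] V} {g : U →ₗ[R] V}
    (hfg : ∀ X : Submodule R V, X ≤ X.comap f → LinearMap.range g ≤ X → X = ⊤)
    {x : ℕ → V} {u : ℕ → U} {t : ℕ} (hx : ∀ s < t, x (s + 1) = f (x s) + g (u s))
    (ht : ∀ w, (x t, w) ∈ span R (range fun s : Fin t ↦ (x s, u s))) :
    span R (range fun s : Fin t ↦ (x s, u s)) = ⊤ := by
  set W := span R (range fun s : Fin t ↦ (x s, u s))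
  set X := W.comap (LinearMap.inl R V U)
  have inr_mem (w : U) : ((0 : V), w) ∈ W := by simpa using W.sub_mem (ht w) (ht 0)
  have fst_mem {v : V} {w : U} (h : (v, w) ∈ W) : v ∈ X := by
    simpa [X] using W.sub_mem h (inr_mem w)
  have next_mem : W ≤ X.comap (f.coprod g) := by
    rw [span_le]
    rintro _ ⟨s, rfl⟩
    suffices x (s + 1) ∈ X by simpa [hx s s.2] using this
    obtain hs | hs : (s : ℕ) + 1 < t ∨ (s : ℕ) + 1 = t := by omega
    · exact fst_mem (subset_span ⟨⟨s + 1, hs⟩, rfl⟩)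
    · rw [hs]
      exact fst_mem (ht 0)
  have hX : X = ⊤ := by
    refine hfg X (fun v hv ↦ by simpa using next_mem hv) ?_
    rintro _ ⟨w, rfl⟩
    simpa using next_mem (inr_mem w)
  refine eq_top_iff'.2 fun ⟨v, w⟩ ↦ ?_
  have inl_mem : (v, (0 : U)) ∈ W := (hX ▸ mem_top : v ∈ X)
  simpa using W.add_mem inl_mem (inr_mem w)

theorem ae_affineMap_notMem {E F : Type*} [NormedAddCommGroup E] [NormedSpace ℝ E]
    [MeasurableSpace E] [BorelSpace E] [FiniteDimensional ℝ E] [AddCommGroup F] [Module ℝ F]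
    (μ : Measure E) [μ.IsAddHaarMeasure] (φ : E →ᵃ[ℝ] F) (S : AffineSubspace ℝ F)
    (h : ∃ x, φ x ∉ S) : ∀ᵐ x ∂μ, φ x ∉ S := by
  obtain ⟨x, hx⟩ := h
  have hS : S.comap φ ≠ ⊤ := fun h ↦
    hx (AffineSubspace.mem_comap.1 (h ▸ AffineSubspace.mem_top ℝ E x))
  exact measure_eq_zero_iff_ae_notMem.1 (Measure.addHaar_affineSubspace μ _ hS)

theorem ae_prodMk_add_notMem {V U : Type*} [AddCommGroup V] [Module ℝ V]
    [NormedAddCommGroup U] [NormedSpace ℝ U] [MeasurableSpace U] [BorelSpace U]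
    [FiniteDimensional ℝ U] (μ : Measure U) [μ.IsAddHaarMeasure] {W : Submodule ℝ (V × U)}
    {x : V} (h : ∃ w, (x, w) ∉ W) (u : U) : ∀ᵐ w ∂μ, (x, u + w) ∉ W := by
  let φ : U →ᵃ[ℝ] V × U := (LinearMap.inr ℝ V U).toAffineMap + AffineMap.const ℝ U (x, u)
  have hφ (w : U) : φ w = (x, u + w) := by simp [φ, add_comm]
  obtain ⟨w, hw⟩ := h
  simpa [hφ] using ae_affineMap_notMem μ φ W.toAffineSubspace ⟨w - u, by simpa [hφ] using hw⟩

section ZeroExtend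

variable {α : Type*} {ℓ : ℕ}

/-- The sequence `ν_0, …, ν_{ℓ-1}, 0, 0, …`: the encoding by which `Zmat` feeds finitely many inputs
to `traj`. -/
def zeroExtend [Zero α] (ν : Fin ℓ → α) (t : ℕ) : α :=
  if h : t < ℓ then ν ⟨t, h⟩ else 0

theorem zeroExtend_of_lt [Zero α] (ν : Fin ℓ → α) {t : ℕ} (ht : t < ℓ) :
    zeroExtend ν t = ν ⟨t, ht⟩ := dif_pos ht

theorem zeroExtend_add_single_of_ne [AddZeroClass α] (ν : Fin ℓ → α)
    (i : Fin ℓ) (w : α) {s : ℕ} (hs : s ≠ i) :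
    zeroExtend (ν + Pi.single i w) s = zeroExtend ν s := by
  by_cases h : s < ℓ
  · have hi : (⟨s, h⟩ : Fin ℓ) ≠ i := fun hi ↦ hs (congrArg Fin.val hi)
    simp [zeroExtend, h, hi]
  · simp [zeroExtend, h]

theorem continuous_zeroExtend [Zero α] [TopologicalSpace α] :
    Continuous (zeroExtend : (Fin ℓ → α) → ℕ → α) := by
  refine continuous_pi fun t ↦ ?_
  by_cases h : t < ℓ
  · simpa only [zeroExtend_of_lt _ h] using continuous_apply _
  · simpa only [zeroExtend, h, dite_false] using continuous_const

end ZeroExtend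

section Trajectory

variable {n m : ℕ} {A : Matrix (Fin n) (Fin n) ℝ} {B : Matrix (Fin n) (Fin m) ℝ}

theorem Controllable.eq_top (hAB : Controllable A B) {X : Submodule ℝ (Fin n → ℝ)}
    (hA : X ≤ X.comap A.mulVecLin) (hB : LinearMap.range B.mulVecLin ≤ X) : X = ⊤ := by
  have pow_mem (k : ℕ) (w : Fin m → ℝ) : A ^ k *ᵥ (B *ᵥ w) ∈ X := by
    induction k with
    | zero => simpa using hB ⟨w, rfl⟩
    | succ k ih => simpa [pow_succ', ← mulVec_mulVec] using hA ih
  have cols_mem : span ℝ (range (ctrbMat A B).col) ≤ X := by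
    rw [span_le]
    rintro _ ⟨⟨k, j⟩, rfl⟩
    have := pow_mem k (Pi.single j 1)
    rwa [mulVec_mulVec, mulVec_single_one] at this
  have span_cols : span ℝ (range (ctrbMat A B).col) = ⊤ := by
    apply eq_top_of_finrank_eq
    rw [← rank_eq_finrank_span_cols, Module.finrank_fin_fun, hAB]
  exact top_le_iff.1 (span_cols ▸ cols_mem)

theorem Controllable.le_mul (hAB : Controllable A B) : n ≤ n * m :=
  calc n = (ctrbMat A B).rank := Eq.symm hAB
    _ ≤ Fintype.card (Fin n × Fin m) := rank_le_card_width _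
    _ = n * m := by simp

variable (A B) (μ0 : Fin n → ℝ)

theorem traj_congr {ν ν' : ℕ → Fin m → ℝ} {t : ℕ} (h : ∀ s < t, ν s = ν' s) :
    traj A B μ0 ν t = traj A B μ0 ν' t := by
  induction t with
  | zero => rfl
  | succ t ih => rw [traj, traj, ih fun s hs ↦ h s (hs.trans t.lt_succ_self), h t t.lt_succ_self]

theorem continuous_traj (t : ℕ) : Continuous fun ν : ℕ → Fin m → ℝ ↦ traj A B μ0 ν t := by
  induction t with
  | zero => exact continuous_const
  | succ t ih => simp only [traj]; fun_prop

/-- The column `(μ_t, ν_t)` of the data matrix at time `t`, as a pair in `ℝⁿ × ℝᵐ`. -/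
noncomputable def stateInput (ν : ℕ → Fin m → ℝ) (t : ℕ) : (Fin n → ℝ) × (Fin m → ℝ) :=
  (traj A B μ0 ν t, ν t)

theorem linearIndependent_stateInput_succ_iff (ν : ℕ → Fin m → ℝ) (t : ℕ) :
    LinearIndependent ℝ (fun s : Fin (t + 1) ↦ stateInput A B μ0 ν s) ↔
      LinearIndependent ℝ (fun s : Fin t ↦ stateInput A B μ0 ν s) ∧
        stateInput A B μ0 ν t ∉ span ℝ (range fun s : Fin t ↦ stateInput A B μ0 ν s) :=
  linearIndependent_finSucc'

theorem traj_zeroExtend_add_single {ℓ : ℕ} (ν : Fin ℓ → Fin m → ℝ) (i : Fin ℓ) (w : Fin m → ℝ)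
    {s : ℕ} (hs : s ≤ i) :
    traj A B μ0 (zeroExtend (ν + Pi.single i w)) s = traj A B μ0 (zeroExtend ν) s :=
  traj_congr A B μ0 fun _ hr ↦ zeroExtend_add_single_of_ne ν i w (hr.trans_le hs).ne

theorem stateInput_zeroExtend_add_single_of_lt {ℓ : ℕ} (ν : Fin ℓ → Fin m → ℝ) (i : Fin ℓ)
    (w : Fin m → ℝ) {s : ℕ} (hs : s < i) :
    stateInput A B μ0 (zeroExtend (ν + Pi.single i w)) s = stateInput A B μ0 (zeroExtend ν) s :=
  Prod.ext (traj_zeroExtend_add_single A B μ0 ν i w hs.le) (zeroExtend_add_single_of_ne ν i w hs.ne)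

theorem stateInput_zeroExtend_add_single_self {ℓ : ℕ} (ν : Fin ℓ → Fin m → ℝ) (i : Fin ℓ)
    (w : Fin m → ℝ) :
    stateInput A B μ0 (zeroExtend (ν + Pi.single i w)) i =
      (traj A B μ0 (zeroExtend ν) i, ν i + w) :=
  Prod.ext (traj_zeroExtend_add_single A B μ0 ν i w le_rfl)
    (by simp [stateInput, zeroExtend_of_lt _ i.2])

theorem isOpen_setOf_linearIndependent_stateInput (t ℓ : ℕ) :
    IsOpen {ν : Fin ℓ → Fin m → ℝ |
      LinearIndependent ℝ fun s : Fin t ↦ stateInput A B μ0 (zeroExtend ν) s} := by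
  have hcont : Continuous fun (ν : Fin ℓ → Fin m → ℝ) (s : Fin t) ↦
      stateInput A B μ0 (zeroExtend ν) s :=
    continuous_pi fun s ↦
      ((continuous_traj A B μ0 s).prodMk (continuous_apply (s : ℕ))).comp continuous_zeroExtend
  exact isOpen_setOfPred_linearIndependent.preimage hcont

variable {A B}

theorem exists_prodMk_traj_notMem (hAB : Controllable A B) {ν : ℕ → Fin m → ℝ} {t : ℕ}
    (ht : t < n + m) :
    ∃ w, (traj A B μ0 ν t, w) ∉ span ℝ (range fun s : Fin t ↦ stateInput A B μ0 ν s) := by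
  by_contra! h
  have hspan : span ℝ (range fun s : Fin t ↦ stateInput A B μ0 ν s) = ⊤ :=
    span_range_prodMk_eq_top (f := A.mulVecLin) (g := B.mulVecLin)
      (fun _ ↦ hAB.eq_top) (fun _ _ ↦ rfl) h
  have hcard : n + m ≤ t :=
    calc n + m = Module.finrank ℝ (span ℝ (range fun s : Fin t ↦ stateInput A B μ0 ν s)) := by
          rw [hspan, finrank_top]
          simp
      _ ≤ Fintype.card (Fin t) := finrank_range_le_card _
      _ = t := Fintype.card_fin t
  exact ht.not_ge hcard

theorem ae_linearIndependent_stateInput_succ (hAB : Controllable A B) {t ℓ : ℕ}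
    (ht : t < n + m) (htℓ : t < ℓ) :
    ∀ᵐ ν : Fin ℓ → Fin m → ℝ,
      LinearIndependent ℝ (fun s : Fin t ↦ stateInput A B μ0 (zeroExtend ν) s) →
      LinearIndependent ℝ (fun s : Fin (t + 1) ↦ stateInput A B μ0 (zeroExtend ν) s) := by
  have hmeas : MeasurableSet {ν : Fin ℓ → Fin m → ℝ |
      LinearIndependent ℝ (fun s : Fin t ↦ stateInput A B μ0 (zeroExtend ν) s) →
      LinearIndependent ℝ (fun s : Fin (t + 1) ↦ stateInput A B μ0 (zeroExtend ν) s)} :=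
    (isOpen_setOf_linearIndependent_stateInput A B μ0 t ℓ).measurableSet.imp
      (isOpen_setOf_linearIndependent_stateInput A B μ0 (t + 1) ℓ).measurableSet
  let i : Fin ℓ := ⟨t, htℓ⟩
  refine ae_mem_of_ae_add_linearMap_mem
    (LinearMap.single ℝ (fun _ : Fin ℓ ↦ Fin m → ℝ) i) volume volume hmeas fun ν ↦ ?_
  filter_upwards [ae_prodMk_add_notMem volume (exists_prodMk_traj_notMem μ0 hAB ht) (ν i)]
    with w hw hindep
  have past_eq : (fun s : Fin t ↦ stateInput A B μ0 (zeroExtend (ν + Pi.single i w)) s) =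
      fun s : Fin t ↦ stateInput A B μ0 (zeroExtend ν) s :=
    funext fun s ↦ stateInput_zeroExtend_add_single_of_lt A B μ0 ν i w s.2
  have present_eq : stateInput A B μ0 (zeroExtend (ν + Pi.single i w)) t =
      (traj A B μ0 (zeroExtend ν) t, ν i + w) :=
    stateInput_zeroExtend_add_single_self A B μ0 ν i w
  refine (linearIndependent_stateInput_succ_iff A B μ0 _ t).2 ⟨hindep, ?_⟩
  rwa [LinearMap.single_apply, past_eq, present_eq]

theorem ae_linearIndependent_stateInput (hAB : Controllable A B) {t ℓ : ℕ}
    (ht : t ≤ n + m) (htℓ : t ≤ ℓ) :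
    ∀ᵐ ν : Fin ℓ → Fin m → ℝ,
      LinearIndependent ℝ fun s : Fin t ↦ stateInput A B μ0 (zeroExtend ν) s := by
  induction t with
  | zero => exact .of_forall fun _ ↦ linearIndependent_empty_type
  | succ t ih =>
    filter_upwards [ih (by omega) (by omega), ae_linearIndependent_stateInput_succ μ0 hAB ht htℓ]
      with ν hν hsucc using hsucc hν

theorem Zmat_col_rev {ℓ : ℕ} (ν : Fin ℓ → Fin m → ℝ) (s : Fin ℓ) :
    (Zmat A B μ0 ν).col s.rev = (LinearEquiv.sumArrowLequivProdArrow (Fin n) (Fin m) ℝ ℝ).symm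
      (stateInput A B μ0 (zeroExtend ν) s) := by
  ext (i | j)
  · simp only [Zmat, col_apply, of_apply, Sum.elim_inl, Fin.rev_rev]
    rfl
  · simp [Zmat, stateInput, zeroExtend_of_lt]

variable {μ0}

theorem le_rank_Zmat_of_linearIndependent {t ℓ : ℕ} (htℓ : t ≤ ℓ) {ν : Fin ℓ → Fin m → ℝ}
    (hν : LinearIndependent ℝ fun s : Fin t ↦ stateInput A B μ0 (zeroExtend ν) s) :
    t ≤ (Zmat A B μ0 ν).rank := by
  let Z' := (Zmat A B μ0 ν).submatrix id fun s : Fin t ↦ (s.castLE htℓ).rev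
  have hcol : Z'.col = (LinearEquiv.sumArrowLequivProdArrow (Fin n) (Fin m) ℝ ℝ).symm ∘
      fun s : Fin t ↦ stateInput A B μ0 (zeroExtend ν) s :=
    funext fun s ↦ Zmat_col_rev μ0 ν (s.castLE htℓ)
  have hindep : LinearIndependent ℝ Z'.col := hcol ▸ hν.map' _ (LinearEquiv.ker _)
  calc t = Z'.rank := by
        rw [rank_eq_finrank_span_cols, finrank_span_eq_card hindep, Fintype.card_fin]
    _ ≤ (Zmat A B μ0 ν).rank := rank_submatrix_le _ _ _

end Trajectory

theorem Zmat_rank_deficient_null_general {n m ℓ : ℕ} (A : Matrix (Fin n) (Fin n) ℝ)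
    (B : Matrix (Fin n) (Fin m) ℝ) (μ0 : Fin n → ℝ) (hctrb : Controllable A B)
    (hℓ : n + m ≤ ℓ) :
    volume {ν : Fin ℓ → Fin m → ℝ | (Zmat A B μ0 ν).rank < n + m} = 0 := by
  refine measure_eq_zero_iff_ae_notMem.2 ?_
  filter_upwards [ae_linearIndependent_stateInput μ0 hctrb le_rfl hℓ] with ν hν
  exact (le_rank_Zmat_of_linearIndependent hℓ hν).not_gt

/-- If `(A, B)` is controllable and `ℓ > (1/2)mn² + (1/2)mn + m + 1` (stated as
`2ℓ > mn² + mn + 2m + 2`), then the set of input sequences `(ν_0, …, ν_{ℓ-1}) ∈ ℝ^{mℓ}` for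
which `Z` fails to have full row rank `n + m` has Lebesgue measure zero. -/
theorem Zmat_rank_deficient_null {n m ℓ : ℕ} (A : Matrix (Fin n) (Fin n) ℝ)
    (B : Matrix (Fin n) (Fin m) ℝ) (μ0 : Fin n → ℝ)
    (hctrb : Controllable A B)
    (hℓ : 2 * ℓ > m * n ^ 2 + m * n + 2 * m + 2) :
    volume {ν : Fin ℓ → Fin m → ℝ | (Zmat A B μ0 ν).rank < n + m} = 0 := by
  have hnm : n ≤ n * m := hctrb.le_mul
  exact Zmat_rank_deficient_null_general A B μ0 hctrb (by nlinarith)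
end

section
/- Consistency of the first-stage least-squares estimator: Let A ∈ ℝ^{n×n}, B ∈ ℝ^{n×m}, fixed inputs ν_0, …, ν_{ℓ-1} ∈ ℝ^m, and let (x_0^{(k)}, …, x_ℓ^{(k)}), k = 1, 2, 3, …, be an i.i.d. sequence of ℝ^{n(ℓ+1)}-valued random vectors with E‖x_t^{(1)}‖² < ∞ for all 0 ≤ t ≤ ℓ, whose mean trajectory μ_t := E[x_t^{(1)}] satisfies μ_{t+1} = A μ_t + B ν_t for 0 ≤ t ≤ ℓ-1. Suppose Z Z^T is invertible, where Z = [[μ_{ℓ-1}, …, μ_0]; [ν_{ℓ-1}, …, ν_0]] ∈ ℝ^{(n+m)×ℓ}. For each number of rollouts n_r, define the sample averages μ̂_t = (1/n_r) Σ_{k=1}^{n_r} x_t^{(k)}, and Ŷ = [μ̂_ℓ, …, μ̂_1], Ẑ = [[μ̂_{ℓ-1}, …, μ̂_0]; [ν_{ℓ-1}, …, ν_0]]. Then with probability one, as n_r → ∞, Ẑ Ẑ^T is eventually invertible and Ŷ Ẑ^T (Ẑ Ẑ^T)^{-1} converges to [A, B]. -/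
open Matrix MeasureTheory ProbabilityTheory Filter Topology

/-! By the strong law of large numbers the sample-mean trajectory converges almost surely to the
mean trajectory, so `Ẑ → Z` and `Ŷ → Y = [μ_ℓ, …, μ_1]`. The mean dynamics say `Y = [A, B] Z`, and
the least-squares estimator returns `[A, B]` on such exact data. Invertible matrices form an open
set on which inversion is continuous, so the estimator itself passes to the limit. -/

section LeastSquares

variable {p q c R : Type*} [Fintype q] [DecidableEq q] [Fintype c]

/-- The least-squares solution `Θ` of `Y = Θ Z`, given by the normal equations as
`Y Zᵀ (Z Zᵀ)⁻¹`. Columns of `Y` and `Z` are observations. The value is junk when `Z Zᵀ` is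
singular, the inverse then being `0`. -/
noncomputable def leastSquares [CommRing R] (Y : Matrix p c R) (Z : Matrix q c R) :
    Matrix p q R :=
  Y * Zᵀ * (Z * Zᵀ)⁻¹

theorem leastSquares_mul_self [CommRing R] (Θ : Matrix p q R) {Z : Matrix q c R}
    (hZ : IsUnit (Z * Zᵀ)) : leastSquares (Θ * Z) Z = Θ := by
  rw [leastSquares, Matrix.mul_assoc Θ Z Zᵀ,
    mul_nonsing_inv_cancel_right _ _ ((isUnit_iff_isUnit_det _).1 hZ)]

variable [Field R] [TopologicalSpace R]

theorem isOpen_setOf_isUnit_matrix [IsTopologicalRing R] [T1Space R] :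
    IsOpen {M : Matrix q q R | IsUnit M} := by
  simp only [isUnit_iff_isUnit_det, isUnit_iff_ne_zero]
  exact isOpen_ne.preimage continuous_id.matrix_det

variable [IsTopologicalDivisionRing R]

theorem continuousAt_matrix_inv_of_isUnit {M : Matrix q q R} (hM : IsUnit M) :
    ContinuousAt (fun N : Matrix q q R => N⁻¹) M := by
  refine continuousAt_matrix_inv M ?_
  rw [Ring.inverse_eq_inv']
  exact continuousAt_inv₀ ((isUnit_iff_isUnit_det M).1 hM).ne_zero

theorem continuousAt_leastSquares (Y : Matrix p c R) {Z : Matrix q c R} (hZ : IsUnit (Z * Zᵀ)) :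
    ContinuousAt (fun D : Matrix p c R × Matrix q c R => leastSquares D.1 D.2) (Y, Z) := by
  have hcross : Continuous fun D : Matrix p c R × Matrix q c R => D.1 * D.2ᵀ :=
    continuous_fst.matrix_mul continuous_snd.matrix_transpose
  have hgram : Continuous fun D : Matrix p c R × Matrix q c R => D.2 * D.2ᵀ :=
    continuous_snd.matrix_mul continuous_snd.matrix_transpose
  have hinv : ContinuousAt (fun D : Matrix p c R × Matrix q c R => (D.2 * D.2ᵀ)⁻¹) (Y, Z) :=
    ContinuousAt.comp (g := Inv.inv) (continuousAt_matrix_inv_of_isUnit hZ) hgram.continuousAt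
  have hmul : Continuous fun P : Matrix p q R × Matrix q q R => P.1 * P.2 :=
    continuous_fst.matrix_mul continuous_snd
  exact hmul.continuousAt.comp (hcross.continuousAt.prodMk hinv)

end LeastSquares

section Trajectory

variable {ι κ R : Type*}

/-- The matrix `[s_ℓ, …, s_1]` of successor states of a trajectory `s`, in reversed time order. -/
def successorMatrix (ℓ : ℕ) (s : ℕ → ι → R) : Matrix ι (Fin ℓ) R :=
  Matrix.of fun i c => s ((c.rev : ℕ) + 1) i

/-- The regressor matrix `[[s_{ℓ-1}, …, s_0]; [ν_{ℓ-1}, …, ν_0]]` of a trajectory `s` driven by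
inputs `ν`, in reversed time order. -/
def regressorMatrix (ℓ : ℕ) (s : ℕ → ι → R) (ν : ℕ → κ → R) : Matrix (ι ⊕ κ) (Fin ℓ) R :=
  Matrix.of fun r c => Sum.elim (s (c.rev : ℕ)) (ν (c.rev : ℕ)) r

theorem successorMatrix_eq_fromCols_mul_regressorMatrix [Semiring R] [Fintype ι]
    [Fintype κ] {ℓ : ℕ} {A : Matrix ι ι R} {B : Matrix ι κ R} {s : ℕ → ι → R} {ν : ℕ → κ → R}
    (hdyn : ∀ t < ℓ, s (t + 1) = A *ᵥ s t + B *ᵥ ν t) :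
    successorMatrix ℓ s = fromCols A B * regressorMatrix ℓ s ν := by
  ext i c
  have hcol : (fromCols A B *ᵥ Sum.elim (s c.rev) (ν c.rev)) i = s (c.rev + 1) i := by
    rw [fromCols_mulVec_sumElim, hdyn _ c.rev.isLt]
  exact hcol.symm

variable [TopologicalSpace R] {α : Type*} {l : Filter α} {ℓ : ℕ} {s : α → ℕ → ι → R}
  {s₀ : ℕ → ι → R}

theorem tendsto_successorMatrix (hs : ∀ t ≤ ℓ, Tendsto (fun a => s a t) l (𝓝 (s₀ t))) :
    Tendsto (fun a => successorMatrix ℓ (s a)) l (𝓝 (successorMatrix ℓ s₀)) :=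
  tendsto_pi_nhds.2 fun i => tendsto_pi_nhds.2 fun c =>
    (hs (c.rev + 1) c.rev.isLt).apply_nhds i

theorem tendsto_regressorMatrix (hs : ∀ t < ℓ, Tendsto (fun a => s a t) l (𝓝 (s₀ t)))
    (ν : ℕ → κ → R) :
    Tendsto (fun a => regressorMatrix ℓ (s a) ν) l (𝓝 (regressorMatrix ℓ s₀ ν)) := by
  refine tendsto_pi_nhds.2 fun r => tendsto_pi_nhds.2 fun c => ?_
  cases r with
  | inl i => exact (hs c.rev c.rev.isLt).apply_nhds i
  | inr j => exact tendsto_const_nhds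

end Trajectory

/-- The sample mean `k⁻¹ ∑_{j < k} x_j` of the first `k` terms of `x`, equal to `0` for `k = 0`. -/
noncomputable def sampleMean {E : Type*} [AddCommMonoid E] [Module ℝ E] (x : ℕ → E) (k : ℕ) : E :=
  (k : ℝ)⁻¹ • ∑ j ∈ Finset.range k, x j

theorem first_stage_least_squares_consistent_general {Ω ι κ : Type*} {mΩ : MeasurableSpace Ω}
    {P : Measure Ω} [Fintype ι] [DecidableEq ι] [Fintype κ] [DecidableEq κ] {ℓ : ℕ}
    (A : Matrix ι ι ℝ) (B : Matrix ι κ ℝ) (ν : ℕ → κ → ℝ) (x : ℕ → Ω → ℕ → ι → ℝ)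
    (hindep : ∀ t ≤ ℓ, Pairwise fun j k => IndepFun (fun ω => x j ω t) (fun ω => x k ω t) P)
    (hident : ∀ t ≤ ℓ, ∀ k, IdentDistrib (fun ω => x k ω t) (fun ω => x 0 ω t) P P)
    (hint : ∀ t ≤ ℓ, ∀ i, Integrable (fun ω => x 0 ω t i) P)
    (μ : ℕ → ι → ℝ) (hμ : ∀ t ≤ ℓ, ∀ i, μ t i = ∫ ω, x 0 ω t i ∂P)
    (hdyn : ∀ t < ℓ, μ (t + 1) = A *ᵥ μ t + B *ᵥ ν t)
    (hZZ : IsUnit (regressorMatrix ℓ μ ν * (regressorMatrix ℓ μ ν)ᵀ)) :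
    ∀ᵐ ω ∂P,
      let μhat := fun k t => sampleMean (fun j => x j ω t) k
      (∀ᶠ k in atTop,
        IsUnit (regressorMatrix ℓ (μhat k) ν * (regressorMatrix ℓ (μhat k) ν)ᵀ)) ∧
      Tendsto (fun k => leastSquares (successorMatrix ℓ (μhat k)) (regressorMatrix ℓ (μhat k) ν))
        atTop (𝓝 (fromCols A B)) := by
  have hmean : ∀ᵐ ω ∂P, ∀ t ≤ ℓ,
      Tendsto (fun k => sampleMean (fun j => x j ω t) k) atTop (𝓝 (μ t)) := by
    simp only [ae_all_iff]
    intro t ht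
    have hμt : μ t = ∫ ω, x 0 ω t ∂P :=
      funext fun i => (hμ t ht i).trans (eval_integral (hint t ht) i).symm
    rw [hμt]
    exact strong_law_ae (fun k ω => x k ω t) (.of_eval (hint t ht)) (hindep t ht) (hident t ht)
  filter_upwards [hmean] with ω hω
  have hZ := tendsto_regressorMatrix (fun t ht => hω t ht.le) ν
  have hY := tendsto_successorMatrix hω
  constructor
  · have hgram := ((continuous_id.matrix_mul continuous_id.matrix_transpose).tendsto _).comp hZ
    exact hgram.eventually (isOpen_setOf_isUnit_matrix.mem_nhds hZZ)
  · rw [successorMatrix_eq_fromCols_mul_regressorMatrix hdyn] at hY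
    have hlim := (continuousAt_leastSquares _ hZZ).tendsto.comp (hY.prodMk_nhds hZ)
    rwa [leastSquares_mul_self _ hZZ] at hlim

/-- Consistency of the first-stage least-squares estimator.
The rollouts `x k : Ω → ℕ → Fin n → ℝ` (the `k`-th rollout, evaluated at times
`t = 0, …, ℓ`) are i.i.d. as `ℝ^{n(ℓ+1)}`-valued random vectors with finite second moments,
and the mean trajectory `μ_t = E[x_t]` satisfies `μ_{t+1} = A μ_t + B ν_t`.  If
`Z Zᵀ` is invertible, where `Z = [[μ_{ℓ-1}, …, μ_0]; [ν_{ℓ-1}, …, ν_0]]`, then with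
probability one, as the number of rollouts `n_r → ∞`, the sample-average matrix
`Ẑ Ẑᵀ` is eventually invertible and `Ŷ Ẑᵀ (Ẑ Ẑᵀ)⁻¹ → [A, B]`. -/
theorem first_stage_least_squares_consistent {Ω : Type*} [MeasureSpace Ω]
    [IsProbabilityMeasure (volume : Measure Ω)] {n m ℓ : ℕ}
    (A : Matrix (Fin n) (Fin n) ℝ) (B : Matrix (Fin n) (Fin m) ℝ)
    (ν : ℕ → Fin m → ℝ)
    (x : ℕ → Ω → ℕ → Fin n → ℝ)
    -- the rollouts (x_0^{(k)}, …, x_ℓ^{(k)}), k = 0, 1, 2, …, are i.i.d.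
    (hindep : iIndepFun (m := fun _ : ℕ => (inferInstance : MeasurableSpace (Fin (ℓ + 1) → Fin n → ℝ)))
      (fun k ω => fun t : Fin (ℓ + 1) => x k ω t) volume)
    (hident : ∀ k, IdentDistrib (fun ω => fun t : Fin (ℓ + 1) => x k ω t)
      (fun ω => fun t : Fin (ℓ + 1) => x 0 ω t) volume volume)
    -- finite second moments
    (hL2 : ∀ t ≤ ℓ, ∀ i, MemLp (fun ω => x 0 ω t i) 2)
    -- the mean trajectory and its dynamics
    (μ : ℕ → Fin n → ℝ) (hμ : ∀ t ≤ ℓ, ∀ i, μ t i = ∫ ω, x 0 ω t i)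
    (hdyn : ∀ t < ℓ, μ (t + 1) = A *ᵥ μ t + B *ᵥ ν t)
    (Z : Matrix (Fin n ⊕ Fin m) (Fin ℓ) ℝ)
    (hZ : Z = Matrix.of fun r c =>
      Sum.elim (fun i => μ (c.rev : ℕ) i) (fun j => ν (c.rev : ℕ) j) r)
    (hZZ : IsUnit (Z * Zᵀ))
    -- the sample averages over the first n_r rollouts and the estimator matrices
    (μhat : ℕ → Ω → ℕ → Fin n → ℝ)
    (hμhat : ∀ nr ω t, μhat nr ω t = (nr : ℝ)⁻¹ • ∑ k ∈ Finset.range nr, x k ω t)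
    (Yhat : ℕ → Ω → Matrix (Fin n) (Fin ℓ) ℝ)
    (hYhat : ∀ nr ω, Yhat nr ω = Matrix.of fun i c => μhat nr ω ((c.rev : ℕ) + 1) i)
    (Zhat : ℕ → Ω → Matrix (Fin n ⊕ Fin m) (Fin ℓ) ℝ)
    (hZhat : ∀ nr ω, Zhat nr ω = Matrix.of fun r c =>
      Sum.elim (fun i => μhat nr ω (c.rev : ℕ) i) (fun j => ν (c.rev : ℕ) j) r) :
    ∀ᵐ ω, (∀ᶠ nr in atTop, IsUnit (Zhat nr ω * (Zhat nr ω)ᵀ)) ∧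
      Tendsto (fun nr => Yhat nr ω * (Zhat nr ω)ᵀ * (Zhat nr ω * (Zhat nr ω)ᵀ)⁻¹)
        atTop (nhds (fromCols A B)) := by
  have heval (t) (ht : t ≤ ℓ) :
      Measurable fun v : Fin (ℓ + 1) → Fin n → ℝ => v ⟨t, Nat.lt_succ_of_le ht⟩ :=
    measurable_pi_apply _
  subst hZ
  simp only [hYhat, hZhat, hμhat]
  exact first_stage_least_squares_consistent_general A B ν x
    (fun t ht _ _ hjk => (hindep.indepFun hjk).comp (heval t ht) (heval t ht))
    (fun t ht k => (hident k).comp (heval t ht))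
    (fun t ht i => (hL2 t ht i).integrable one_le_two) μ hμ hdyn hZZ
end
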